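/- Let p ≥ 2. In 𝕃 = 𝕃(2,3,p), for an integer n ≥ 1 one has n·ω ∈ ℤx₁ if and only if lcm(3,p) divides n; equivalently, the class of ω in the quotient group 𝕃/ℤx₁ has order exactly lcm(3,p). -/

import Mathlib

/-- The relations subgroup of `ℤ³` defining `𝕃(2,3,p)`: generated by
`(2,-3,0)` and `(0,3,-p)`. -/
def Lrel (p : ℕ) : AddSubgroup (ℤ × ℤ × ℤ) :=
  AddSubgroup.closure {(2, -3, 0), (0, 3, -(p : ℤ))}

/-- The abelian group `𝕃(2,3,p)` with generators `x₁, x₂, x₃` and relations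
`2x₁ = 3x₂ = p x₃`. -/
abbrev Lgrp (p : ℕ) := (ℤ × ℤ × ℤ) ⧸ Lrel p

/-- The generator `x₁` of `𝕃(2,3,p)`. -/
def lx1 (p : ℕ) : Lgrp p := QuotientAddGroup.mk (1, 0, 0)

/-- The generator `x₂` of `𝕃(2,3,p)`. -/
def lx2 (p : ℕ) : Lgrp p := QuotientAddGroup.mk (0, 1, 0)

/-- The generator `x₃` of `𝕃(2,3,p)`. -/
def lx3 (p : ℕ) : Lgrp p := QuotientAddGroup.mk (0, 0, 1)

/-- The canonical element `c = p x₃`. -/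
def lc (p : ℕ) : Lgrp p := (p : ℤ) • lx3 p

/-- The dualizing element `ω = c - x₁ - x₂ - x₃`. -/
def lw (p : ℕ) : Lgrp p := lc p - lx1 p - lx2 p - lx3 p

/-- The persistent subset `ℙ = ℤx₃ ∪ (x₂ + ℤx₃)` of `𝕃(2,3,p)`. -/
def Lpersistent (p : ℕ) : Set (Lgrp p) :=
  {y | ∃ m : ℤ, y = m • lx3 p ∨ y = lx2 p + m • lx3 p}

/-!
Killing `x₁` in the presentation of `𝕃` leaves `⟨x₂, x₃ ∣ 3x₂ = p x₃ = 0⟩ ≅ ℤ/3 × ℤ/p`, where `c`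
vanishes and hence `ω` becomes `(-1, -1)`, an element of order `lcm(3, p)`.
-/

section Quotient

variable {G : Type*} [AddGroup G]

theorem zsmul_mem_iff_addOrderOf_mk_dvd (H : AddSubgroup G) [H.Normal] (a : G) (n : ℤ) :
    n • a ∈ H ↔ (addOrderOf (a : G ⧸ H) : ℤ) ∣ n := by
  rw [addOrderOf_dvd_iff_zsmul_eq_zero, ← QuotientAddGroup.mk_zsmul,
    QuotientAddGroup.eq_zero_iff]

theorem addOrderOf_mk_of_ker_eq {M : Type*} [AddGroup M] {H : AddSubgroup G} [H.Normal]
    {f : G →+ M} (hf : f.ker = H) (a : G) : addOrderOf (a : G ⧸ H) = addOrderOf (f a) := by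
  subst hf
  exact (addOrderOf_injective (QuotientAddGroup.kerLift f)
    (QuotientAddGroup.kerLift_injective f) a).symm

end Quotient

namespace Lgrp

variable (p : ℕ)

theorem mk_eq_zsmul_add (a b c : ℤ) :
    (QuotientAddGroup.mk (a, b, c) : Lgrp p) = a • lx1 p + b • lx2 p + c • lx3 p := by
  simp only [lx1, lx2, lx3, ← QuotientAddGroup.mk_zsmul, ← QuotientAddGroup.mk_add]
  simp

theorem two_zsmul_lx1_eq_three_zsmul_lx2 : (2 : ℤ) • lx1 p = (3 : ℤ) • lx2 p := by
  have relation : (QuotientAddGroup.mk (2, -3, 0) : Lgrp p) = 0 :=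
    (QuotientAddGroup.eq_zero_iff _).2 (AddSubgroup.subset_closure (by simp))
  rw [mk_eq_zsmul_add, neg_zsmul, zero_zsmul, add_zero] at relation
  exact add_neg_eq_zero.1 relation

theorem three_zsmul_lx2_eq_lc : (3 : ℤ) • lx2 p = lc p := by
  have relation : (QuotientAddGroup.mk (0, 3, -(p : ℤ)) : Lgrp p) = 0 :=
    (QuotientAddGroup.eq_zero_iff _).2 (AddSubgroup.subset_closure (by simp))
  rw [mk_eq_zsmul_add, zero_zsmul, zero_add, neg_zsmul] at relation
  exact add_neg_eq_zero.1 relation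

/-- The homomorphism `𝕃(2,3,p) → ℤ/3 × ℤ/p` killing `x₁` and sending `x₂`, `x₃` to the standard
generators; it realizes orders in `𝕃/ℤx₁` as orders in the concrete group `ℤ/3 × ℤ/p`. -/
def killX1 : Lgrp p →+ ZMod 3 × ZMod p :=
  QuotientAddGroup.lift (Lrel p)
    (((Int.castAddHom (ZMod 3)).prodMap (Int.castAddHom (ZMod p))).comp
      (AddMonoidHom.snd ℤ (ℤ × ℤ))) <| by
    rw [Lrel, AddSubgroup.closure_le]
    rintro _ (rfl | rfl)
    · exact Prod.ext (show ((-3 : ℤ) : ZMod 3) = 0 from rfl) (by simp)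
    · exact Prod.ext (show ((3 : ℤ) : ZMod 3) = 0 from rfl) (by simp)

theorem killX1_mk (a b c : ℤ) :
    killX1 p (QuotientAddGroup.mk (a, b, c)) = ((b : ZMod 3), (c : ZMod p)) :=
  rfl

theorem killX1_lw : killX1 p (lw p) = (-1, -1) := by
  have killX1_lx1 : killX1 p (lx1 p) = 0 := by simp [lx1, killX1_mk]
  have killX1_lx2 : killX1 p (lx2 p) = (1, 0) := by simp [lx2, killX1_mk]
  have killX1_lx3 : killX1 p (lx3 p) = (0, 1) := by simp [lx3, killX1_mk]
  have killX1_lc : killX1 p (lc p) = 0 := by simp [lc, killX1_lx3]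
  simp [lw, killX1_lx1, killX1_lx2, killX1_lx3, killX1_lc]

theorem ker_killX1 : (killX1 p).ker = AddSubgroup.zmultiples (lx1 p) := by
  refine le_antisymm ?_ ?_
  · rintro ⟨a, b, c⟩ hker
    obtain ⟨hb, hc⟩ : (b : ZMod 3) = 0 ∧ (c : ZMod p) = 0 := Prod.mk.inj hker
    obtain ⟨u, rfl⟩ := (ZMod.intCast_zmod_eq_zero_iff_dvd b 3).1 hb
    obtain ⟨v, rfl⟩ := (ZMod.intCast_zmod_eq_zero_iff_dvd c p).1 hc
    have mk_eq_zsmul_lx1 : (QuotientAddGroup.mk (a, ((3 : ℕ) : ℤ) * u, (p : ℤ) * v) : Lgrp p) =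
        (a + u * 2 + v * 2) • lx1 p := calc
      _ = a • lx1 p + u • (3 : ℤ) • lx2 p + v • lc p := by
        rw [mk_eq_zsmul_add, mul_zsmul', mul_zsmul', lc, Nat.cast_ofNat]
      _ = a • lx1 p + u • (2 : ℤ) • lx1 p + v • (2 : ℤ) • lx1 p := by
        rw [← three_zsmul_lx2_eq_lc, two_zsmul_lx1_eq_three_zsmul_lx2]
      _ = (a + u * 2 + v * 2) • lx1 p := by simp only [add_zsmul, mul_zsmul]
    exact AddSubgroup.mem_zmultiples_iff.2 ⟨_, mk_eq_zsmul_lx1.symm⟩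
  · rw [AddSubgroup.zmultiples_le, AddMonoidHom.mem_ker]
    simp [lx1, killX1_mk]

theorem addOrderOf_mk_lw :
    addOrderOf (QuotientAddGroup.mk (lw p) : Lgrp p ⧸ AddSubgroup.zmultiples (lx1 p)) =
      Nat.lcm 3 p := by
  rw [addOrderOf_mk_of_ker_eq (ker_killX1 p), killX1_lw, Prod.addOrderOf_mk, addOrderOf_neg,
    addOrderOf_neg, ZMod.addOrderOf_one, ZMod.addOrderOf_one]

end Lgrp

/-- For `n ≥ 1` one has `n·ω ∈ ℤx₁` iff `lcm(3,p) ∣ n`; equivalently the class of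
`ω` in `𝕃(2,3,p)/ℤx₁` has (additive) order exactly `lcm(3,p)`. -/
theorem stmt_3 (p : ℕ) (hp : 2 ≤ p) :
    (∀ n : ℤ, 1 ≤ n →
      (n • lw p ∈ AddSubgroup.zmultiples (lx1 p) ↔ (Nat.lcm 3 p : ℤ) ∣ n)) ∧
    addOrderOf
      ((QuotientAddGroup.mk (lw p)) : Lgrp p ⧸ AddSubgroup.zmultiples (lx1 p)) =
        Nat.lcm 3 p := by
  refine ⟨fun n _ => ?_, Lgrp.addOrderOf_mk_lw p⟩
  rw [zsmul_mem_iff_addOrderOf_mk_dvd, Lgrp.addOrderOf_mk_lw]
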